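/- In the superdiffusive regime 3/4 < p < 1, assume S_n/n^{2p−1} → L almost surely and ℙ(L² > 0) > 0. Then, under the conditional probability measure ℙ(· ∣ {L² > 0}), the law of √(V_n)·(p̂_n − p) converges weakly to the standard Gaussian distribution N(0,1) as n → ∞. -/

import Mathlib

open MeasureTheory ProbabilityTheory Filter Finset
open scoped BoundedContinuousFunction ENNReal NNReal Topology

noncomputable section

variable {Ω : Type*}

/-- Position of the elephant random walk: `S n = X 1 + ⋯ + X n`. -/
def erwS (X : ℕ → Ω → ℝ) (n : ℕ) (ω : Ω) : ℝ :=
  ∑ k ∈ Finset.Icc 1 n, X k ω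

/-- `V n = 4 ∑_{k=1}^{n-1} (S k / k)²`, the approximate conditional Fisher information. -/
def erwV (X : ℕ → Ω → ℝ) (n : ℕ) (ω : Ω) : ℝ :=
  4 * ∑ k ∈ Finset.Icc 1 (n - 1), (erwS X k ω / k) ^ 2

/-- The quasi-maximum likelihood estimator `p̂ n` of the memory parameter. -/
def erwPhat (X : ℕ → Ω → ℝ) (n : ℕ) (ω : Ω) : ℝ :=
  (∑ k ∈ Finset.Icc 1 (n - 1), (erwS X k ω / k) * (X (k + 1) ω + erwS X k ω / k)) /
    (2 * ∑ k ∈ Finset.Icc 1 (n - 1), (erwS X k ω / k) ^ 2)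

/-- The elephant random walk hypotheses with memory parameter `p ∈ [0,1]`:
the steps take values in `{-1, 1}`, are adapted to the filtration `ℱ`
(which plays the role of `σ(X_1, …, X_n)`), and
`E[X_{n+1} | ℱ_n] = (2p - 1) · S_n / n` almost surely. -/
def IsERW {m0 : MeasurableSpace Ω} (μ : Measure Ω) (ℱ : Filtration ℕ m0)
    (X : ℕ → Ω → ℝ) (p : ℝ) : Prop :=
  0 ≤ p ∧ p ≤ 1 ∧
  (∀ n, 1 ≤ n → ∀ ω, X n ω = 1 ∨ X n ω = -1) ∧
  (∀ n, 1 ≤ n → Measurable[ℱ n] (X n)) ∧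
  (∀ n, 1 ≤ n → μ[X (n + 1) | ℱ n] =ᵐ[μ] fun ω => (2 * p - 1) * (erwS X n ω / n))

/-!
With `a = 2 * p - 1`, the error `√V_n (p̂_n - p)` is exactly the self-normalised martingale
`(∑ x_k ξ_k) / √(∑ x_k²)`, where `x_k = S_k / k` and `ξ_k = X_{k + 1} - a * x_k` are the
innovations. Since `x_k ∼ L * k ^ (a - 1)` and `∑ k ^ (2 * (a - 1)) = ∞`, a slowly growing burn-in
time `m` contributes nothing, and `L` may be replaced by its estimate at time `m`. The weights
become predictable, and the resulting martingale array `d` has small entries and, because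
`ξ_k² → 1`, sums of squares tending to `1`.

McLeish's product `T_n = ∏ (1 + i d_{n, k})` satisfies `exp (i ∑ d_{n, k}) ≈ T_n exp (-1/2)`
and has conditional expectation `1` given the burn-in σ-algebra. As these σ-algebras exhaust the
information carried by the array, `∫ T_n ∂Q → 1` for every probability measure `Q ≪ μ` by Lévy's
upward theorem, in particular for `Q = μ[|{0 < L²}]`, although `L` is not known at any finite time.
-/

section McLeishProduct

lemma norm_prod_sub_prod_le_sum {ι R : Type*} [NormedCommRing R] [NormOneClass R]
    (s : Finset ι) {f g : ι → R} (hf : ∀ i, ‖f i‖ ≤ 1) (hg : ∀ i, ‖g i‖ ≤ 1) :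
    ‖∏ i ∈ s, f i - ∏ i ∈ s, g i‖ ≤ ∑ i ∈ s, ‖f i - g i‖ := by
  classical
  induction s using Finset.induction_on with
  | empty => simp
  | insert i s hi ih =>
    have hprod : ‖∏ j ∈ s, f j‖ ≤ 1 :=
      (Finset.norm_prod_le s f).trans (prod_le_one (fun _ _ ↦ norm_nonneg _) fun j _ ↦ hf j)
    rw [prod_insert hi, prod_insert hi, sum_insert hi]
    calc ‖f i * ∏ j ∈ s, f j - g i * ∏ j ∈ s, g j‖
        = ‖(f i - g i) * ∏ j ∈ s, f j + g i * (∏ j ∈ s, f j - ∏ j ∈ s, g j)‖ := by ring_nf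
      _ ≤ ‖f i - g i‖ * ‖∏ j ∈ s, f j‖ + ‖g i‖ * ‖∏ j ∈ s, f j - ∏ j ∈ s, g j‖ :=
        (norm_add_le _ _).trans (add_le_add (norm_mul_le _ _) (norm_mul_le _ _))
      _ ≤ ‖f i - g i‖ * 1 + 1 * ∑ j ∈ s, ‖f j - g j‖ := by gcongr; exact hg i
      _ = ‖f i - g i‖ + ∑ j ∈ s, ‖f j - g j‖ := by ring

lemma norm_one_add_mul_I_le_exp (x : ℝ) : ‖1 + x * Complex.I‖ ≤ Real.exp (x ^ 2 / 2) := by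
  refine le_of_sq_le_sq ?_ (Real.exp_pos _).le
  rw [← Complex.ofReal_one, Complex.sq_norm, Complex.normSq_add_mul_I, ← Real.exp_nat_mul]
  calc 1 ^ 2 + x ^ 2 = x ^ 2 + 1 := by ring
    _ ≤ Real.exp (x ^ 2) := Real.add_one_le_exp _
    _ = Real.exp ((2 : ℕ) * (x ^ 2 / 2)) := by push_cast; ring_nf

lemma norm_one_add_mul_I_mul_exp_le_one (x : ℝ) :
    ‖(1 + x * Complex.I) * Real.exp (-(x ^ 2 / 2))‖ ≤ 1 := by
  rw [norm_mul, Complex.norm_real, Real.norm_of_nonneg (Real.exp_pos _).le, Real.exp_neg,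
    ← div_eq_mul_inv]
  exact div_le_one_of_le₀ (norm_one_add_mul_I_le_exp x) (Real.exp_pos _).le

lemma norm_exp_mul_I_sub_taylor_le {x : ℝ} (hx : |x| ≤ 1) :
    ‖Complex.exp (x * Complex.I) - (1 + x * Complex.I - x ^ 2 / 2)‖ ≤ |x| ^ 3 * (2 / 9) := by
  have h := Complex.exp_bound (x := x * Complex.I) (by simpa using hx) (n := 3) (by norm_num)
  convert h using 2
  · rw [sum_range_succ, sum_range_succ, sum_range_one]
    norm_num [mul_pow]
    ring
  · simp
  · norm_num [Nat.factorial]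

lemma abs_exp_neg_sub_taylor_le {x : ℝ} (hx : |x| ≤ 1) :
    |Real.exp (-(x ^ 2 / 2)) - (1 - x ^ 2 / 2)| ≤ |x| ^ 3 * (1 / 4) := by
  have hsq : x ^ 2 ≤ 1 := by rwa [sq_le_one_iff_abs_le_one]
  have habs : |(-(x ^ 2 / 2))| = x ^ 2 / 2 := by rw [abs_neg, abs_of_nonneg (by positivity)]
  calc |Real.exp (-(x ^ 2 / 2)) - (1 - x ^ 2 / 2)|
      = |Real.exp (-(x ^ 2 / 2)) - 1 - -(x ^ 2 / 2)| := by ring_nf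
    _ ≤ (-(x ^ 2 / 2)) ^ 2 := Real.abs_exp_sub_one_sub_id_le (by rw [habs]; linarith)
    _ = |x| ^ 3 * (|x| * (1 / 4)) := by
      linear_combination -(1 / 4) * (|x| ^ 2 + x ^ 2) * sq_abs x
    _ ≤ |x| ^ 3 * (1 * (1 / 4)) := by gcongr
    _ = |x| ^ 3 * (1 / 4) := by ring

lemma norm_exp_mul_I_sub_le (x : ℝ) :
    ‖Complex.exp (x * Complex.I) - (1 + x * Complex.I) * Real.exp (-(x ^ 2 / 2))‖
      ≤ 2 * |x| ^ 3 := by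
  rcases le_total |x| 1 with hx | hx
  · set r : ℂ := Complex.exp (x * Complex.I) - (1 + x * Complex.I - x ^ 2 / 2) with hr
    set s : ℝ := Real.exp (-(x ^ 2 / 2)) - (1 - x ^ 2 / 2) with hs
    have hr_le : ‖r‖ ≤ |x| ^ 3 * (2 / 9) := norm_exp_mul_I_sub_taylor_le hx
    have hs_le : |s| ≤ |x| ^ 3 * (1 / 4) := abs_exp_neg_sub_taylor_le hx
    calc _ = ‖r + (x ^ 3 / 2 : ℝ) * Complex.I - (1 + x * Complex.I) * s‖ := by
            congr 1
            rw [hr, hs]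
            push_cast
            ring
      _ ≤ ‖r‖ + |x| ^ 3 / 2 + (1 + |x|) * |s| := by
        refine (norm_sub_le _ _).trans (add_le_add ((norm_add_le _ _).trans ?_) ?_)
        · simp
        · rw [norm_mul, Complex.norm_real, Real.norm_eq_abs]
          gcongr
          exact (norm_add_le _ _).trans (by simp)
      _ ≤ |x| ^ 3 * (2 / 9) + |x| ^ 3 / 2 + (1 + 1) * (|x| ^ 3 * (1 / 4)) := by gcongr
      _ ≤ 2 * |x| ^ 3 := by linarith [pow_nonneg (abs_nonneg x) 3]
  · have h₁ : ‖Complex.exp (x * Complex.I)‖ = 1 := Complex.norm_exp_ofReal_mul_I x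
    calc _ ≤ 1 + 1 := (norm_sub_le _ _).trans
            (add_le_add h₁.le (norm_one_add_mul_I_mul_exp_le_one x))
      _ ≤ 2 * |x| ^ 3 := by linarith [one_le_pow₀ hx (n := 3)]

/-- McLeish's product `∏_{j < n} (1 + i θ_j)`: a substitute for `exp (i ∑_{j < n} θ_j)` which is a
martingale in `n` whenever `θ` is a martingale difference sequence. -/
def mcLeishProd (θ : ℕ → ℝ) (n : ℕ) : ℂ := ∏ j ∈ range n, (1 + θ j * Complex.I)

lemma mcLeishProd_succ (θ : ℕ → ℝ) (n : ℕ) :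
    mcLeishProd θ (n + 1) = mcLeishProd θ n + θ n • (mcLeishProd θ n * Complex.I) := by
  rw [mcLeishProd, prod_range_succ, ← mcLeishProd, Complex.real_smul]
  ring

lemma mcLeishProd_eq_one {θ : ℕ → ℝ} {n : ℕ} (hθ : ∀ j < n, θ j = 0) : mcLeishProd θ n = 1 :=
  prod_eq_one fun j hj ↦ by rw [hθ j (mem_range.1 hj), Complex.ofReal_zero, zero_mul, add_zero]

lemma norm_mcLeishProd_le (θ : ℕ → ℝ) (n : ℕ) :
    ‖mcLeishProd θ n‖ ≤ Real.exp ((∑ j ∈ range n, θ j ^ 2) / 2) := by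
  rw [mcLeishProd, norm_prod, sum_div, Real.exp_sum]
  exact prod_le_prod (fun _ _ ↦ norm_nonneg _) fun j _ ↦ norm_one_add_mul_I_le_exp (θ j)

lemma norm_exp_sum_mul_I_sub_mcLeishProd_le (θ : ℕ → ℝ) (n : ℕ) :
    ‖Complex.exp ((∑ j ∈ range n, θ j : ℝ) * Complex.I)
        - mcLeishProd θ n * Real.exp (-((∑ j ∈ range n, θ j ^ 2) / 2))‖
      ≤ 2 * ∑ j ∈ range n, |θ j| ^ 3 := by
  have hexp : Complex.exp ((∑ j ∈ range n, θ j : ℝ) * Complex.I)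
      = ∏ j ∈ range n, Complex.exp (θ j * Complex.I) := by
    rw [← Complex.exp_sum, ← sum_mul, Complex.ofReal_sum]
  have hprod : mcLeishProd θ n * Real.exp (-((∑ j ∈ range n, θ j ^ 2) / 2))
      = ∏ j ∈ range n, ((1 + θ j * Complex.I) * Real.exp (-(θ j ^ 2 / 2))) := by
    rw [prod_mul_distrib, ← Complex.ofReal_prod, ← Real.exp_sum, sum_neg_distrib, ← sum_div,
      mcLeishProd]
  rw [hexp, hprod, mul_sum]
  exact (norm_prod_sub_prod_le_sum _ (fun j ↦ (Complex.norm_exp_ofReal_mul_I (θ j)).le)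
    fun j ↦ norm_one_add_mul_I_mul_exp_le_one (θ j)).trans
    (sum_le_sum fun j _ ↦ norm_exp_mul_I_sub_le (θ j))

end McLeishProduct

section ChangeOfMeasure

variable {m m0 : MeasurableSpace Ω} {μ : Measure Ω} {E : Type*} [NormedAddCommGroup E]
  [NormedSpace ℝ E] [CompleteSpace E]

lemma integral_condExp_smul_of_stronglyMeasurable [IsFiniteMeasure μ] (hm : m ≤ m0) {g : Ω → ℝ}
    (hg : Integrable g μ) {Y : Ω → E} (hY : StronglyMeasurable[m] Y) {C : ℝ}
    (hYC : ∀ ω, ‖Y ω‖ ≤ C) : ∫ ω, μ[g | m] ω • Y ω ∂μ = ∫ ω, g ω • Y ω ∂μ := by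
  have hgY : Integrable (g • Y) μ :=
    hg.smul_bdd C (hY.mono hm).aestronglyMeasurable (ae_of_all _ hYC)
  calc ∫ ω, μ[g | m] ω • Y ω ∂μ = ∫ ω, μ[g • Y | m] ω ∂μ := integral_congr_ae
        (condExp_smul_of_aestronglyMeasurable_right hg hgY hY.aestronglyMeasurable).symm
    _ = ∫ ω, g ω • Y ω ∂μ := integral_condExp hm

lemma integral_condExp_smul_of_condExp_eq_const [IsFiniteMeasure μ] (hm : m ≤ m0) (g : Ω → ℝ)
    {Y : Ω → E} (hY : AEStronglyMeasurable Y μ) {C : ℝ} (hYC : ∀ ω, ‖Y ω‖ ≤ C) {c : E}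
    (hYc : μ[Y | m] =ᵐ[μ] fun _ ↦ c) : ∫ ω, μ[g | m] ω • Y ω ∂μ = (∫ ω, g ω ∂μ) • c := by
  have hYi : Integrable Y μ := .of_bound hY C (ae_of_all _ hYC)
  have hgY : Integrable (μ[g | m] • Y) μ := integrable_condExp.smul_bdd C hY (ae_of_all _ hYC)
  calc ∫ ω, μ[g | m] ω • Y ω ∂μ = ∫ ω, μ[μ[g | m] • Y | m] ω ∂μ := (integral_condExp hm).symm
    _ = ∫ ω, μ[g | m] ω • c ∂μ := integral_congr_ae <|
      (condExp_smul_of_aestronglyMeasurable_left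
        stronglyMeasurable_condExp.aestronglyMeasurable hgY hYi).trans <|
      hYc.mono fun ω hω ↦ by rw [Pi.smul_apply', hω]
    _ = (∫ ω, g ω ∂μ) • c := by rw [integral_smul_const, integral_condExp hm]

variable {ℱ : Filtration ℕ m0}

lemma norm_integral_smul_sub_le_eLpNorm [IsFiniteMeasure μ] {g : Ω → ℝ} (hg : Integrable g μ)
    {Y : Ω → E} (hY : StronglyMeasurable[⨆ n, ℱ n] Y) {C : ℝ} (hYC : ∀ ω, ‖Y ω‖ ≤ C) {k : ℕ}
    {c : E} (hYc : μ[Y | ℱ k] =ᵐ[μ] fun _ ↦ c) :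
    ‖∫ ω, g ω • Y ω ∂μ - (∫ ω, g ω ∂μ) • c‖
      ≤ C * (eLpNorm (μ[g | ℱ k] - μ[g | ⨆ n, ℱ n]) 1 μ).toReal := by
  have hsup : ⨆ n, ℱ n ≤ m0 := iSup_le ℱ.le
  have hYm : AEStronglyMeasurable Y μ := (hY.mono hsup).aestronglyMeasurable
  have hint (m : MeasurableSpace Ω) : Integrable (fun ω ↦ μ[g | m] ω • Y ω) μ :=
    integrable_condExp.smul_bdd C hYm (ae_of_all _ hYC)
  have hdiff : Integrable (μ[g | ℱ k] - μ[g | ⨆ n, ℱ n]) μ :=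
    integrable_condExp.sub integrable_condExp
  rw [← integral_condExp_smul_of_stronglyMeasurable hsup hg hY hYC,
    ← integral_condExp_smul_of_condExp_eq_const (ℱ.le k) g hYm hYC hYc, norm_sub_rev,
    ← integral_sub (hint _) (hint _), eLpNorm_one_eq_lintegral_enorm,
    ← integral_norm_eq_lintegral_enorm hdiff.aestronglyMeasurable, ← integral_const_mul]
  refine norm_integral_le_of_norm_le (hdiff.norm.const_mul C) (ae_of_all _ fun ω ↦ ?_)
  rw [← sub_smul, norm_smul, mul_comm]
  exact mul_le_mul_of_nonneg_right (hYC ω) (norm_nonneg _)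

/- Changing the measure costs nothing in the limit: by Lévy's upward theorem the density of `Q`,
projected on `σ(⋃ ℱ n)`, is almost `ℱ (k n)`-measurable. -/
lemma tendsto_integral_of_condExp_eq_const [IsFiniteMeasure μ] {Q : Measure Ω}
    [IsProbabilityMeasure Q] (hQ : Q ≪ μ) {Y : ℕ → Ω → E}
    (hY : ∀ n, StronglyMeasurable[⨆ n, ℱ n] (Y n)) {C : ℝ} (hYC : ∀ n ω, ‖Y n ω‖ ≤ C)
    {k : ℕ → ℕ} (hk : Tendsto k atTop atTop) {c : E}
    (hYc : ∀ n, μ[Y n | ℱ (k n)] =ᵐ[μ] fun _ ↦ c) :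
    Tendsto (fun n ↦ ∫ ω, Y n ω ∂Q) atTop (𝓝 c) := by
  set g : Ω → ℝ := fun ω ↦ (Q.rnDeriv μ ω).toReal
  have hg : Integrable g μ := Measure.integrable_toReal_rnDeriv
  have hg_one : ∫ ω, g ω ∂μ = 1 := by
    simpa only [smul_eq_mul, mul_one, integral_const, probReal_univ] using
      integral_rnDeriv_smul hQ (f := fun _ ↦ (1 : ℝ))
  have hlevy : Tendsto
      (fun n ↦ C * (eLpNorm (μ[g | ℱ (k n)] - μ[g | ⨆ n, ℱ n]) 1 μ).toReal) atTop (𝓝 0) := by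
    simpa only [ENNReal.toReal_zero, mul_zero, Function.comp_def] using
      ((ENNReal.tendsto_toReal ENNReal.zero_ne_top).comp
        ((tendsto_eLpNorm_condExp g).comp hk)).const_mul C
  refine tendsto_iff_norm_sub_tendsto_zero.2
    (squeeze_zero (fun _ ↦ norm_nonneg _) (fun n ↦ ?_) hlevy)
  simpa only [integral_rnDeriv_smul hQ, hg_one, one_smul, g] using
    norm_integral_smul_sub_le_eLpNorm hg (hY n) (hYC n) (hYc n)

end ChangeOfMeasure

section MartingaleDifference

variable {m0 : MeasurableSpace Ω} {μ : Measure Ω} {ℱ : Filtration ℕ m0}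

/-- Martingale difference sequences. The index is shifted so that sums over `range n` are
`ℱ n`-measurable: `d k` is the increment from time `k` to time `k + 1`. -/
structure IsMartingaleDifference (μ : Measure Ω) (ℱ : Filtration ℕ m0) (d : ℕ → Ω → ℝ) :
    Prop where
  stronglyMeasurable (k : ℕ) : StronglyMeasurable[ℱ (k + 1)] (d k)
  integrable (k : ℕ) : Integrable (d k) μ
  condExp_eq_zero (k : ℕ) : μ[d k | ℱ k] =ᵐ[μ] 0

namespace IsMartingaleDifference

variable {d : ℕ → Ω → ℝ}

lemma measurable (hd : IsMartingaleDifference μ ℱ d) (k : ℕ) : Measurable (d k) :=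
  ((hd.stronglyMeasurable k).mono (ℱ.le _)).measurable

lemma predictable_mul (hd : IsMartingaleDifference μ ℱ d) {w : ℕ → Ω → ℝ}
    (hw : ∀ k, StronglyMeasurable[ℱ k] (w k)) {C : ℕ → ℝ} (hwC : ∀ k ω, |w k ω| ≤ C k) :
    IsMartingaleDifference μ ℱ (fun k ↦ w k * d k) := by
  have hint (k : ℕ) : Integrable (w k * d k) μ :=
    (hd.integrable k).bdd_mul ((hw k).mono (ℱ.le k)).aestronglyMeasurable
      (ae_of_all _ (hwC k))
  refine ⟨fun k ↦ ((hw k).mono (ℱ.mono k.le_succ)).mul (hd.stronglyMeasurable k), hint,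
    fun k ↦ ?_⟩
  filter_upwards [condExp_mul_of_stronglyMeasurable_left (hw k) (hint k) (hd.integrable k),
    hd.condExp_eq_zero k] with ω hpull hzero
  rw [hpull, Pi.mul_apply, hzero, Pi.zero_apply, mul_zero]

lemma stronglyMeasurable_mcLeishProd (hd : IsMartingaleDifference μ ℱ d) (n : ℕ) :
    StronglyMeasurable[ℱ n] (fun ω ↦ mcLeishProd (fun j ↦ d j ω) n) := by
  refine Finset.stronglyMeasurable_fun_prod _ fun j hj ↦ ?_
  have hdj : StronglyMeasurable[ℱ n] (d j) :=
    (hd.stronglyMeasurable j).mono (ℱ.mono (mem_range.1 hj))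
  exact stronglyMeasurable_const.add
    ((Complex.continuous_ofReal.comp_stronglyMeasurable hdj).mul stronglyMeasurable_const)

lemma martingale_mcLeishProd [IsFiniteMeasure μ] (hd : IsMartingaleDifference μ ℱ d)
    {C : ℕ → ℝ} (hC : ∀ n ω, ∑ j ∈ range n, d j ω ^ 2 ≤ C n) :
    Martingale (fun n ω ↦ mcLeishProd (fun j ↦ d j ω) n) ℱ μ := by
  have hbdd (n : ℕ) (ω : Ω) : ‖mcLeishProd (fun j ↦ d j ω) n‖ ≤ Real.exp (C n / 2) :=
    (norm_mcLeishProd_le _ n).trans (Real.exp_le_exp.2 (by linarith [hC n ω]))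
  have hmeas (n : ℕ) :
      AEStronglyMeasurable (fun ω ↦ mcLeishProd (fun j ↦ d j ω) n * Complex.I) μ :=
    (((hd.stronglyMeasurable_mcLeishProd n).mono (ℱ.le n)).mul
      stronglyMeasurable_const).aestronglyMeasurable
  refine martingale_of_condExp_sub_eq_zero_nat hd.stronglyMeasurable_mcLeishProd
    (fun n ↦ .of_bound ((hd.stronglyMeasurable_mcLeishProd n).mono (ℱ.le n)).aestronglyMeasurable
      _ (ae_of_all _ (hbdd n))) fun n ↦ ?_
  have hincr : ((fun ω ↦ mcLeishProd (fun j ↦ d j ω) (n + 1))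
        - fun ω ↦ mcLeishProd (fun j ↦ d j ω) n)
      = d n • fun ω ↦ mcLeishProd (fun j ↦ d j ω) n * Complex.I := by
    ext ω
    simp only [Pi.sub_apply, mcLeishProd_succ, add_sub_cancel_left, Pi.smul_apply']
  rw [hincr]
  filter_upwards [condExp_smul_of_aestronglyMeasurable_right (m := ℱ n) (hd.integrable n)
    ((hd.integrable n).smul_bdd (Real.exp (C n / 2)) (hmeas n) (ae_of_all _ fun ω ↦ by
      simpa only [norm_mul, Complex.norm_I, mul_one] using hbdd n ω))
    ((hd.stronglyMeasurable_mcLeishProd n).mul stronglyMeasurable_const).aestronglyMeasurable,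
    hd.condExp_eq_zero n] with ω hpull hzero
  rw [hpull, Pi.smul_apply', hzero, Pi.zero_apply, zero_smul, Pi.zero_apply]

lemma condExp_mcLeishProd_eq_one [IsFiniteMeasure μ] (hd : IsMartingaleDifference μ ℱ d)
    {C : ℕ → ℝ} (hC : ∀ n ω, ∑ j ∈ range n, d j ω ^ 2 ≤ C n) {k n : ℕ} (hkn : k ≤ n)
    (hzero : ∀ j < k, d j = 0) :
    μ[fun ω ↦ mcLeishProd (fun j ↦ d j ω) n | ℱ k] =ᵐ[μ] fun _ ↦ 1 :=
  ((hd.martingale_mcLeishProd hC).2 k n hkn).trans <| ae_of_all _ fun ω ↦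
    mcLeishProd_eq_one fun j hj ↦ congrFun (hzero j hj) ω

end IsMartingaleDifference

/-- A martingale difference array with uniformly small entries and bounded row sums of squares,
whose `n`-th row is silent before a time `k n` that tends to infinity. The silent period is what
makes the limit insensitive to a change of the measure. -/
structure IsNegligibleMartingaleArray (μ : Measure Ω) (ℱ : Filtration ℕ m0)
    (d : ℕ → ℕ → Ω → ℝ) (k : ℕ → ℕ) (ε : ℕ → ℝ) (K : ℝ) : Prop where
  isMartingaleDifference (n : ℕ) : IsMartingaleDifference μ ℱ (d n)
  start_le (n : ℕ) : k n ≤ n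
  tendsto_start : Tendsto k atTop atTop
  eq_zero (n j : ℕ) (hj : j < k n) : d n j = 0
  abs_entry_le (n j : ℕ) (ω : Ω) : |d n j ω| ≤ ε n
  tendsto_bound : Tendsto ε atTop (𝓝 0)
  sum_sq_le (n : ℕ) (ω : Ω) : ∑ j ∈ range n, d n j ω ^ 2 ≤ K

namespace IsNegligibleMartingaleArray

variable {d : ℕ → ℕ → Ω → ℝ} {k : ℕ → ℕ} {ε : ℕ → ℝ} {K : ℝ}

lemma const_mul (h : IsNegligibleMartingaleArray μ ℱ d k ε K) (t : ℝ) :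
    IsNegligibleMartingaleArray μ ℱ (fun n j ω ↦ t * d n j ω) k (fun n ↦ |t| * ε n)
      (t ^ 2 * K) where
  isMartingaleDifference n := (h.isMartingaleDifference n).predictable_mul
    (w := fun _ _ ↦ t) (fun _ ↦ stronglyMeasurable_const) (C := fun _ ↦ |t|) fun _ _ ↦ le_rfl
  start_le := h.start_le
  tendsto_start := h.tendsto_start
  eq_zero n j hj := funext fun ω ↦ by simp only [h.eq_zero n j hj, Pi.zero_apply, mul_zero]
  abs_entry_le n j ω := by
    rw [abs_mul]
    exact mul_le_mul_of_nonneg_left (h.abs_entry_le n j ω) (abs_nonneg t)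
  tendsto_bound := by simpa only [mul_zero] using h.tendsto_bound.const_mul |t|
  sum_sq_le n ω := by
    simp only [mul_pow, ← mul_sum]
    exact mul_le_mul_of_nonneg_left (h.sum_sq_le n ω) (sq_nonneg t)

lemma measurable_sum (h : IsNegligibleMartingaleArray μ ℱ d k ε K) (n : ℕ) :
    Measurable (fun ω ↦ ∑ j ∈ range n, d n j ω) :=
  Finset.measurable_fun_sum _ fun j _ ↦ (h.isMartingaleDifference n).measurable j

lemma norm_mcLeishProd_le_exp (h : IsNegligibleMartingaleArray μ ℱ d k ε K) (n : ℕ) (ω : Ω) :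
    ‖mcLeishProd (fun j ↦ d n j ω) n‖ ≤ Real.exp (K / 2) :=
  (norm_mcLeishProd_le _ n).trans (Real.exp_le_exp.2 (by linarith [h.sum_sq_le n ω]))

lemma sum_abs_pow_three_le (h : IsNegligibleMartingaleArray μ ℱ d k ε K) (n : ℕ) (ω : Ω) :
    ∑ j ∈ range n, |d n j ω| ^ 3 ≤ ε n * K := by
  have hε : 0 ≤ ε n := (abs_nonneg _).trans (h.abs_entry_le n 0 ω)
  calc ∑ j ∈ range n, |d n j ω| ^ 3 = ∑ j ∈ range n, |d n j ω| * d n j ω ^ 2 :=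
        sum_congr rfl fun j _ ↦ by rw [← sq_abs]; ring
    _ ≤ ∑ j ∈ range n, ε n * d n j ω ^ 2 :=
      sum_le_sum fun j _ ↦ mul_le_mul_of_nonneg_right (h.abs_entry_le n j ω) (sq_nonneg _)
    _ ≤ ε n * K := by rw [← mul_sum]; exact mul_le_mul_of_nonneg_left (h.sum_sq_le n ω) hε

lemma tendsto_integral_mcLeishProd [IsFiniteMeasure μ]
    (h : IsNegligibleMartingaleArray μ ℱ d k ε K) {Q : Measure Ω} [IsProbabilityMeasure Q]
    (hQ : Q ≪ μ) : Tendsto (fun n ↦ ∫ ω, mcLeishProd (fun j ↦ d n j ω) n ∂Q) atTop (𝓝 1) := by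
  have hsq (n l : ℕ) (ω : Ω) : ∑ j ∈ range l, d n j ω ^ 2 ≤ l * ε n ^ 2 := by
    calc ∑ j ∈ range l, d n j ω ^ 2 ≤ ∑ _j ∈ range l, ε n ^ 2 := sum_le_sum fun j _ ↦
          sq_le_sq' (abs_le.1 (h.abs_entry_le n j ω)).1 (abs_le.1 (h.abs_entry_le n j ω)).2
      _ = l * ε n ^ 2 := by rw [sum_const, card_range, nsmul_eq_mul]
  exact tendsto_integral_of_condExp_eq_const hQ
    (fun n ↦ ((h.isMartingaleDifference n).stronglyMeasurable_mcLeishProd n).mono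
      (le_iSup (fun i ↦ (ℱ i : MeasurableSpace Ω)) n))
    h.norm_mcLeishProd_le_exp h.tendsto_start fun n ↦
      (h.isMartingaleDifference n).condExp_mcLeishProd_eq_one (hsq n) (h.start_le n) (h.eq_zero n)

lemma tendsto_exp_sum_sub_mcLeishProd (h : IsNegligibleMartingaleArray μ ℱ d k ε K) {q : ℝ}
    {ω : Ω} (hq : Tendsto (fun n ↦ ∑ j ∈ range n, d n j ω ^ 2) atTop (𝓝 q)) :
    Tendsto (fun n ↦ Complex.exp ((∑ j ∈ range n, d n j ω : ℝ) * Complex.I)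
      - mcLeishProd (fun j ↦ d n j ω) n * Real.exp (-(q / 2))) atTop (𝓝 0) := by
  set P : ℕ → ℂ := fun n ↦ mcLeishProd (fun j ↦ d n j ω) n
  set r : ℕ → ℝ := fun n ↦ Real.exp (-((∑ j ∈ range n, d n j ω ^ 2) / 2))
  have hr : Tendsto r atTop (𝓝 (Real.exp (-(q / 2)))) :=
    (Real.continuous_exp.tendsto _).comp (hq.div_const 2).neg
  have hP : Tendsto (fun n ↦ P n * ((r n - Real.exp (-(q / 2)) : ℝ) : ℂ)) atTop (𝓝 0) := by
    refine squeeze_zero_norm (fun n ↦ ?_) (a := fun n ↦ Real.exp (K / 2) * |r n - _|)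
      (by simpa only [sub_self, abs_zero, mul_zero] using
        (hr.sub_const (Real.exp (-(q / 2)))).abs.const_mul (Real.exp (K / 2)))
    rw [norm_mul, Complex.norm_real, Real.norm_eq_abs]
    exact mul_le_mul_of_nonneg_right (h.norm_mcLeishProd_le_exp n ω) (abs_nonneg _)
  have hexp : Tendsto (fun n ↦ Complex.exp ((∑ j ∈ range n, d n j ω : ℝ) * Complex.I)
      - P n * r n) atTop (𝓝 0) :=
    squeeze_zero_norm (fun n ↦ (norm_exp_sum_mul_I_sub_mcLeishProd_le _ n).trans
      (mul_le_mul_of_nonneg_left (h.sum_abs_pow_three_le n ω) zero_le_two))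
      (by simpa only [zero_mul, mul_zero] using (h.tendsto_bound.mul_const K).const_mul 2)
  convert hexp.add hP using 1
  · funext n
    push_cast
    ring
  · rw [add_zero]

lemma tendsto_integral_exp_sum [IsFiniteMeasure μ]
    (h : IsNegligibleMartingaleArray μ ℱ d k ε K) {Q : Measure Ω} [IsProbabilityMeasure Q]
    (hQ : Q ≪ μ) {q : ℝ}
    (hq : ∀ᵐ ω ∂Q, Tendsto (fun n ↦ ∑ j ∈ range n, d n j ω ^ 2) atTop (𝓝 q)) :
    Tendsto (fun n ↦ ∫ ω, Complex.exp ((∑ j ∈ range n, d n j ω : ℝ) * Complex.I) ∂Q) atTop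
      (𝓝 (Real.exp (-(q / 2)))) := by
  set e : ℕ → Ω → ℂ := fun n ω ↦ Complex.exp ((∑ j ∈ range n, d n j ω : ℝ) * Complex.I)
  set P : ℕ → Ω → ℂ := fun n ω ↦ mcLeishProd (fun j ↦ d n j ω) n * Real.exp (-(q / 2))
  have he_meas (n : ℕ) : AEStronglyMeasurable (e n) Q :=
    (Complex.measurable_exp.comp ((Complex.measurable_ofReal.comp
      (h.measurable_sum n)).mul_const _)).aestronglyMeasurable
  have he_norm (n : ℕ) (ω : Ω) : ‖e n ω‖ ≤ 1 := (Complex.norm_exp_ofReal_mul_I _).le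
  have hP_meas (n : ℕ) : AEStronglyMeasurable (P n) Q :=
    ((((h.isMartingaleDifference n).stronglyMeasurable_mcLeishProd n).mono (ℱ.le n)).mul
      stronglyMeasurable_const).aestronglyMeasurable
  have hP_norm (n : ℕ) (ω : Ω) : ‖P n ω‖ ≤ Real.exp (K / 2) * Real.exp (-(q / 2)) := by
    rw [norm_mul, Complex.norm_real, Real.norm_of_nonneg (Real.exp_pos _).le]
    exact mul_le_mul_of_nonneg_right (h.norm_mcLeishProd_le_exp n ω) (Real.exp_pos _).le
  have hdiff : Tendsto (fun n ↦ ∫ ω, (e n - P n) ω ∂Q) atTop (𝓝 0) := by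
    simpa only [integral_zero] using tendsto_integral_of_dominated_convergence
      (fun _ ↦ 1 + Real.exp (K / 2) * Real.exp (-(q / 2)))
      (fun n ↦ (he_meas n).sub (hP_meas n)) (integrable_const _)
      (fun n ↦ ae_of_all _ fun ω ↦
        (norm_sub_le _ _).trans (add_le_add (he_norm n ω) (hP_norm n ω)))
      (hq.mono fun ω hω ↦ h.tendsto_exp_sum_sub_mcLeishProd hω)
  have hP : Tendsto (fun n ↦ ∫ ω, P n ω ∂Q) atTop (𝓝 (Real.exp (-(q / 2)))) := by
    simpa only [P, integral_mul_const, one_mul] using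
      (h.tendsto_integral_mcLeishProd hQ).mul_const (Real.exp (-(q / 2)) : ℂ)
  convert hdiff.add hP using 1
  · funext n
    rw [integral_sub' (.of_bound (he_meas n) _ (ae_of_all _ (he_norm n)))
      (.of_bound (hP_meas n) _ (ae_of_all _ (hP_norm n))), sub_add_cancel]
  · rw [zero_add]

theorem tendstoInDistribution_gaussianReal [IsFiniteMeasure μ]
    (h : IsNegligibleMartingaleArray μ ℱ d k ε K) {Q : Measure Ω} [IsProbabilityMeasure Q]
    (hQ : Q ≪ μ) {v : ℝ≥0}
    (hv : ∀ᵐ ω ∂Q, Tendsto (fun n ↦ ∑ j ∈ range n, d n j ω ^ 2) atTop (𝓝 v)) :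
    TendstoInDistribution (fun n ω ↦ ∑ j ∈ range n, d n j ω) atTop (id : ℝ → ℝ) (fun _ ↦ Q)
      (gaussianReal 0 v) := by
  refine ⟨fun n ↦ (h.measurable_sum n).aemeasurable, aemeasurable_id,
    ProbabilityMeasure.tendsto_iff_tendsto_charFun.2 fun t ↦ ?_⟩
  have hexp := (h.const_mul t).tendsto_integral_exp_sum hQ (q := t ^ 2 * v) <|
    hv.mono fun ω hω ↦ by simpa only [mul_pow, mul_sum] using hω.const_mul (t ^ 2)
  simp only [ProbabilityMeasure.coe_mk, Measure.map_id, charFun_gaussianReal]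
  convert hexp using 1
  · funext n
    rw [charFun_apply_real, integral_map (h.measurable_sum n).aemeasurable
      (Measurable.aestronglyMeasurable (by fun_prop))]
    simp only [← mul_sum, Complex.ofReal_mul]
  · push_cast
    ring_nf

end IsNegligibleMartingaleArray

end MartingaleDifference

section ConvergenceInDistribution

variable {m0 : MeasurableSpace Ω} {Q : Measure Ω} [IsProbabilityMeasure Q]

lemma tendstoInDistribution_of_sub_mul_tendsto_zero {Ω' : Type*} {m' : MeasurableSpace Ω'}
    {ν : Measure Ω'} [IsProbabilityMeasure ν] {Z : Ω' → ℝ} {N R H : ℕ → Ω → ℝ}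
    (hN : TendstoInDistribution N atTop Z (fun _ ↦ Q) ν)
    (hR_meas : ∀ n, AEMeasurable (R n) Q) (hH_meas : ∀ n, AEMeasurable (H n) Q)
    (hR : ∀ᵐ ω ∂Q, Tendsto (fun n ↦ R n ω) atTop (𝓝 1))
    (hH : ∀ᵐ ω ∂Q, Tendsto (fun n ↦ H n ω - R n ω * N n ω) atTop (𝓝 0)) :
    TendstoInDistribution H atTop Z (fun _ ↦ Q) ν := by
  have hRN_meas (n : ℕ) : AEMeasurable (fun ω ↦ R n ω * N n ω) Q :=
    (hR_meas n).mul (hN.forall_aemeasurable n)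
  have hRN : TendstoInDistribution (fun n ω ↦ R n ω * N n ω) atTop (fun ω ↦ 1 * Z ω)
      (fun _ ↦ Q) ν :=
    hN.continuous_comp_prodMk_of_tendstoInMeasure_const
      (g := fun y : ℝ × ℝ ↦ y.2 * y.1) (by fun_prop)
      (tendstoInMeasure_of_tendsto_ae (fun n ↦ (hR_meas n).aestronglyMeasurable) hR) hR_meas
  have hsum := hRN.add_of_tendstoInMeasure_const
    (tendstoInMeasure_of_tendsto_ae
      (fun n ↦ ((hH_meas n).sub (hRN_meas n)).aestronglyMeasurable) hH)
    fun n ↦ (hH_meas n).sub (hRN_meas n)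
  convert hsum using 1
  · funext n ω
    exact (add_sub_cancel _ _).symm
  · funext ω
    rw [one_mul, add_zero]

lemma tendsto_integral_of_tendstoInDistribution {m0 : MeasurableSpace Ω} {Q : Measure Ω}
    [IsProbabilityMeasure Q] {ν : Measure ℝ} [IsProbabilityMeasure ν] {Y : ℕ → Ω → ℝ}
    (h : TendstoInDistribution Y atTop (id : ℝ → ℝ) (fun _ ↦ Q) ν) (f : ℝ →ᵇ ℝ) :
    Tendsto (fun n ↦ ∫ ω, f (Y n ω) ∂Q) atTop (𝓝 (∫ y, f y ∂ν)) := by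
  have hf := ProbabilityMeasure.tendsto_iff_forall_integral_tendsto.1 h.tendsto f
  simp only [ProbabilityMeasure.coe_mk, Measure.map_id] at hf
  exact hf.congr fun n ↦ integral_map (h.forall_aemeasurable n)
    f.continuous.measurable.aestronglyMeasurable

end ConvergenceInDistribution

section PartialNorm

lemma tendsto_weighted_average {w a : ℕ → ℝ} {l : ℝ} (hw : ∀ k, 0 ≤ w k)
    (hw_div : Tendsto (fun n ↦ ∑ k ∈ range n, w k) atTop atTop)
    (ha : Tendsto a atTop (𝓝 l)) :
    Tendsto (fun n ↦ (∑ k ∈ range n, w k * a k) / ∑ k ∈ range n, w k) atTop (𝓝 l) := by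
  have herr : (fun k ↦ w k * (a k - l)) =o[atTop] w := by
    simpa only [mul_one] using (Asymptotics.isBigO_refl w atTop).mul_isLittleO
      ((Asymptotics.isLittleO_one_iff ℝ).2 (tendsto_sub_nhds_zero_iff.2 ha))
  have havg := (herr.sum_range hw hw_div).tendsto_div_nhds_zero.add_const l
  rw [zero_add] at havg
  refine havg.congr' ?_
  filter_upwards [hw_div.eventually_gt_atTop 0] with n hn
  rw [div_add' _ _ _ hn.ne', mul_sum, ← sum_add_distrib]
  exact congrArg (· / _) (sum_congr rfl fun k _ ↦ by ring)

/-- A burn-in time `m n ≤ n` that tends to infinity but is negligible compared with `u n`. -/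
structure IsBurnIn (u : ℕ → ℝ) (m : ℕ → ℕ) : Prop where
  le (n : ℕ) : m n ≤ n
  tendsto_atTop : Tendsto m atTop atTop
  tendsto_div : Tendsto (fun n ↦ m n / u n) atTop (𝓝 0)

lemma exists_isBurnIn {u : ℕ → ℝ} (hu : Tendsto u atTop atTop) : ∃ m, IsBurnIn u m := by
  have hsqrt : Tendsto (fun n ↦ √(u n)) atTop atTop := Real.tendsto_sqrt_atTop.comp hu
  refine ⟨fun n ↦ min n ⌊√(u n)⌋₊, fun n ↦ min_le_left _ _,
    tendsto_inf_atTop _ tendsto_id (tendsto_nat_floor_atTop.comp hsqrt),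
    squeeze_zero' ?_ ?_ hsqrt.inv_tendsto_atTop⟩
  · filter_upwards [hu.eventually_ge_atTop 0] with n hn using by positivity
  · filter_upwards [hu.eventually_gt_atTop 0] with n hn
    calc ((min n ⌊√(u n)⌋₊ : ℕ) : ℝ) / u n ≤ √(u n) / u n := by
          gcongr
          exact (Nat.cast_le.2 (min_le_right _ _)).trans (Nat.floor_le (Real.sqrt_nonneg _))
      _ = (√(u n))⁻¹ := Real.sqrt_div_self

lemma IsBurnIn.tendsto_sum_div_zero {u y : ℕ → ℝ} {m : ℕ → ℕ} (hm : IsBurnIn u m) {B : ℝ}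
    (hy : ∀ k, |y k| ≤ B) : Tendsto (fun n ↦ (∑ k ∈ range (m n), y k) / u n) atTop (𝓝 0) := by
  refine squeeze_zero_norm (fun n ↦ ?_)
    (by simpa only [abs_zero, mul_zero] using hm.tendsto_div.abs.const_mul B)
  rw [norm_div, abs_div, Nat.abs_cast, ← mul_div_assoc, Real.norm_eq_abs, Real.norm_eq_abs]
  refine div_le_div_of_nonneg_right ?_ (abs_nonneg _)
  calc |∑ k ∈ range (m n), y k| ≤ ∑ k ∈ range (m n), |y k| := abs_sum_le_sum_abs _ _
    _ ≤ ∑ _k ∈ range (m n), B := sum_le_sum fun k _ ↦ hy k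
    _ = B * m n := by rw [sum_const, card_range, nsmul_eq_mul, mul_comm]

/-- The `ℓ²` norm of the first `n` terms of a real sequence; it normalises the martingale
transforms below. -/
def partialNorm (x : ℕ → ℝ) (n : ℕ) : ℝ := √(∑ k ∈ range n, x k ^ 2)

variable {c x : ℕ → ℝ} {l : ℝ}

lemma partialNorm_nonneg (x : ℕ → ℝ) (n : ℕ) : 0 ≤ partialNorm x n := Real.sqrt_nonneg _

lemma sq_partialNorm (x : ℕ → ℝ) (n : ℕ) : partialNorm x n ^ 2 = ∑ k ∈ range n, x k ^ 2 :=
  Real.sq_sqrt (sum_nonneg fun _ _ ↦ sq_nonneg _)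

lemma tendsto_sum_sq_mul_div_sq_partialNorm (hc_div : Tendsto (partialNorm c) atTop atTop)
    {a : ℕ → ℝ} (ha : Tendsto a atTop (𝓝 l)) :
    Tendsto (fun n ↦ (∑ k ∈ range n, c k ^ 2 * a k) / partialNorm c n ^ 2) atTop (𝓝 l) := by
  simp only [sq_partialNorm]
  refine tendsto_weighted_average (fun _ ↦ sq_nonneg _) ?_ ha
  simpa only [Function.comp_def, sq_partialNorm] using
    (tendsto_pow_atTop two_ne_zero).comp hc_div

lemma tendsto_partialNorm_div_partialNorm (hc : ∀ k, c k ≠ 0)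
    (hc_div : Tendsto (partialNorm c) atTop atTop)
    (hx : Tendsto (fun k ↦ x k / c k) atTop (𝓝 l)) :
    Tendsto (fun n ↦ partialNorm x n / partialNorm c n) atTop (𝓝 |l|) := by
  rw [← Real.sqrt_sq_eq_abs]
  refine (tendsto_sum_sq_mul_div_sq_partialNorm hc_div (hx.pow 2)).sqrt.congr fun n ↦ ?_
  rw [Real.sqrt_div' _ (sq_nonneg _), Real.sqrt_sq (partialNorm_nonneg c n), partialNorm]
  congr 2
  exact sum_congr rfl fun k _ ↦ by rw [div_pow, mul_div_cancel₀ _ (pow_ne_zero 2 (hc k))]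

/-- A predictable proxy for the self-normalised weight `x k / partialNorm x n` when `x k ∼ l * c k`:
the unknown `l` is replaced by the estimate `|x m / c m|` available at time `m`, the weights before
`m` are dropped, and the ratio of the two estimates is clipped so that the weight is bounded. -/
def predictableWeight (c x : ℕ → ℝ) (m n k : ℕ) : ℝ :=
  if k < m then 0
  else max (-2) (min 2 (x k / c k / |x m / c m|)) * (c k / partialNorm c n)

lemma abs_predictableWeight_le (c x : ℕ → ℝ) (m n k : ℕ) :
    |predictableWeight c x m n k| ≤ 2 * (|c k| / partialNorm c n) := by
  have hnn : 0 ≤ |c k| / partialNorm c n := div_nonneg (abs_nonneg _) (partialNorm_nonneg c n)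
  unfold predictableWeight
  split_ifs
  · rw [abs_zero]
    positivity
  · rw [abs_mul, abs_div (c k), abs_of_nonneg (partialNorm_nonneg c n)]
    exact mul_le_mul_of_nonneg_right
      (abs_le.2 ⟨le_max_left _ _, max_le (by norm_num) (min_le_left _ _)⟩) hnn

lemma sum_sq_predictableWeight_le (c x : ℕ → ℝ) (m n : ℕ) :
    ∑ k ∈ range n, predictableWeight c x m n k ^ 2 ≤ 4 := by
  calc ∑ k ∈ range n, predictableWeight c x m n k ^ 2
      ≤ ∑ k ∈ range n, 4 * (c k ^ 2 / partialNorm c n ^ 2) := by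
        refine sum_le_sum fun k _ ↦ ?_
        rw [← sq_abs]
        refine (pow_le_pow_left₀ (abs_nonneg _) (abs_predictableWeight_le c x m n k) 2).trans_eq ?_
        rw [mul_pow, div_pow, sq_abs]
        norm_num
    _ = 4 * (partialNorm c n ^ 2 / partialNorm c n ^ 2) := by
        rw [← mul_sum, ← sum_div, sq_partialNorm]
    _ ≤ 4 * 1 := by gcongr; exact div_self_le_one _
    _ = 4 := mul_one 4

lemma eventually_predictableWeight_eq (hc : ∀ k, c k ≠ 0)
    (hx : Tendsto (fun k ↦ x k / c k) atTop (𝓝 l)) (hl : l ≠ 0) :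
    ∀ᶠ m in atTop, ∀ n k, predictableWeight c x m n k
      = if k < m then 0 else x k / (|x m / c m| * partialNorm c n) := by
  have hl' : 0 < |l| := abs_pos.2 hl
  have hlow : ∀ᶠ k in atTop, 2 / 3 * |l| < |x k / c k| :=
    hx.abs.eventually_const_lt (by linarith)
  have hupp : ∀ᶠ k in atTop, |x k / c k| < 4 / 3 * |l| :=
    hx.abs.eventually_lt_const (by linarith)
  filter_upwards [hlow, eventually_forall_ge_atTop.2 hupp] with m hm hge n k
  unfold predictableWeight
  split_ifs with hkm
  · rfl
  have hratio : |x k / c k / (|x m / c m|)| ≤ 2 := by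
    rw [abs_div, abs_abs, div_le_iff₀ (by linarith)]
    linarith [hge k (not_lt.1 hkm)]
  rw [min_eq_right (abs_le.1 hratio).2, max_eq_right (abs_le.1 hratio).1, div_mul_div_comm,
    div_mul_cancel₀ _ (hc k)]

lemma sum_range_ite_lt (f : ℕ → ℝ) {m n : ℕ} (hmn : m ≤ n) :
    ∑ k ∈ range n, (if k < m then 0 else f k) = ∑ k ∈ range n, f k - ∑ k ∈ range m, f k := by
  induction n, hmn using Nat.le_induction with
  | base => rw [sub_self]; exact sum_eq_zero fun k hk ↦ if_pos (mem_range.1 hk)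
  | succ n hmn ih => rw [sum_range_succ, ih, if_neg hmn.not_gt, sum_range_succ]; ring

section Path

variable {ξ : ℕ → ℝ} {m : ℕ → ℕ} {v C R : ℝ}

lemma eventually_sum_predictableWeight_mul_pow_eq (hc : ∀ k, c k ≠ 0)
    (hx : Tendsto (fun k ↦ x k / c k) atTop (𝓝 l)) (hl : l ≠ 0)
    (hm : IsBurnIn (partialNorm c) m) (ξ : ℕ → ℝ) {r : ℕ} (hr : r ≠ 0) :
    ∀ᶠ n in atTop, ∑ k ∈ range n, (predictableWeight c x (m n) n k * ξ k) ^ r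
      = (∑ k ∈ range n, (x k * ξ k) ^ r - ∑ k ∈ range (m n), (x k * ξ k) ^ r)
        / (|x (m n) / c (m n)| * partialNorm c n) ^ r := by
  filter_upwards [hm.tendsto_atTop.eventually (eventually_predictableWeight_eq hc hx hl)]
    with n hn
  rw [← sum_range_ite_lt _ (hm.le n), sum_div]
  refine sum_congr rfl fun k _ ↦ ?_
  rw [hn]
  split_ifs
  · rw [zero_mul, zero_pow hr, zero_div]
  · rw [div_mul_eq_mul_div, div_pow]

lemma exists_abs_mul_le_of_tendsto_div (hc : ∀ k, c k ≠ 0) (hC : ∀ k, |c k| ≤ C)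
    (hx : Tendsto (fun k ↦ x k / c k) atTop (𝓝 l)) (hξ : ∀ k, |ξ k| ≤ R) :
    ∃ B, ∀ k, |x k * ξ k| ≤ B := by
  obtain ⟨A, hA_mem⟩ := hx.abs.bddAbove_range
  refine ⟨A * C * R, fun k ↦ ?_⟩
  have hA' : |x k / c k| ≤ A := hA_mem ⟨k, rfl⟩
  have hA : 0 ≤ A := (abs_nonneg _).trans hA'
  calc |x k * ξ k| = |x k / c k| * |c k| * |ξ k| := by
        rw [← abs_mul, div_mul_cancel₀ _ (hc k), abs_mul]
    _ ≤ A * C * R :=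
        mul_le_mul (mul_le_mul hA' (hC k) (abs_nonneg _) hA) (hξ k) (abs_nonneg _)
          (mul_nonneg hA ((abs_nonneg _).trans (hC k)))

lemma tendsto_sum_sq_predictableWeight_mul (hc : ∀ k, c k ≠ 0) (hC : ∀ k, |c k| ≤ C)
    (hc_div : Tendsto (partialNorm c) atTop atTop)
    (hx : Tendsto (fun k ↦ x k / c k) atTop (𝓝 l)) (hl : l ≠ 0)
    (hR : ∀ k, |ξ k| ≤ R) (hξ : Tendsto (fun k ↦ ξ k ^ 2) atTop (𝓝 v))
    (hm : IsBurnIn (partialNorm c) m) :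
    Tendsto (fun n ↦ ∑ k ∈ range n, (predictableWeight c x (m n) n k * ξ k) ^ 2) atTop
      (𝓝 v) := by
  obtain ⟨B, hB⟩ := exists_abs_mul_le_of_tendsto_div hc hC hx hR
  have hfull : Tendsto (fun n ↦ (∑ k ∈ range n, (x k * ξ k) ^ 2) / partialNorm c n ^ 2) atTop
      (𝓝 (l ^ 2 * v)) := by
    refine (tendsto_sum_sq_mul_div_sq_partialNorm hc_div ((hx.pow 2).mul hξ)).congr fun n ↦ ?_
    refine congrArg (· / _) (sum_congr rfl fun k _ ↦ ?_)
    rw [← mul_assoc, ← mul_pow, mul_div_cancel₀ _ (hc k), mul_pow]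
  have hburn : Tendsto (fun n ↦ (∑ k ∈ range (m n), (x k * ξ k) ^ 2) / partialNorm c n ^ 2)
      atTop (𝓝 0) := by
    have h := (hm.tendsto_sum_div_zero (y := fun k ↦ (x k * ξ k) ^ 2) (B := B ^ 2)
      fun k ↦ by rw [abs_pow]; exact pow_le_pow_left₀ (abs_nonneg _) (hB k) 2).div_atTop hc_div
    simpa only [div_div, ← sq] using h
  have hquot := (hfull.sub hburn).div ((hx.abs.comp hm.tendsto_atTop).pow 2)
    (pow_ne_zero 2 (abs_ne_zero.2 hl))
  rw [sub_zero, sq_abs, mul_div_cancel_left₀ _ (pow_ne_zero 2 hl)] at hquot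
  refine hquot.congr' ?_
  filter_upwards [eventually_sum_predictableWeight_mul_pow_eq hc hx hl hm ξ two_ne_zero]
    with n hn
  rw [hn, Pi.div_apply, Function.comp_apply, ← sub_div, div_div, mul_pow, mul_comm (_ ^ 2)]

lemma tendsto_predictable_div_partialNorm (hc : ∀ k, c k ≠ 0)
    (hc_div : Tendsto (partialNorm c) atTop atTop)
    (hx : Tendsto (fun k ↦ x k / c k) atTop (𝓝 l)) (hl : l ≠ 0)
    (hm : Tendsto m atTop atTop) :
    Tendsto (fun n ↦ |x (m n) / c (m n)| * partialNorm c n / partialNorm x n) atTop (𝓝 1) := by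
  have hl' : |l| ≠ 0 := abs_ne_zero.2 hl
  have hquot := (hx.abs.comp hm).div (tendsto_partialNorm_div_partialNorm hc hc_div hx) hl'
  rw [div_self hl'] at hquot
  exact hquot.congr fun n ↦ by rw [Pi.div_apply, Function.comp_apply, div_div_eq_mul_div]

lemma tendsto_selfNormalized_sub_predictable (hc : ∀ k, c k ≠ 0) (hC : ∀ k, |c k| ≤ C)
    (hc_div : Tendsto (partialNorm c) atTop atTop)
    (hx : Tendsto (fun k ↦ x k / c k) atTop (𝓝 l)) (hl : l ≠ 0) (hR : ∀ k, |ξ k| ≤ R)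
    (hm : IsBurnIn (partialNorm c) m) :
    Tendsto (fun n ↦ (∑ k ∈ range n, x k * ξ k) / partialNorm x n
      - |x (m n) / c (m n)| * partialNorm c n / partialNorm x n
        * ∑ k ∈ range n, predictableWeight c x (m n) n k * ξ k) atTop (𝓝 0) := by
  obtain ⟨B, hB⟩ := exists_abs_mul_le_of_tendsto_div hc hC hx hR
  have hl' : |l| ≠ 0 := abs_ne_zero.2 hl
  have hburn := (hm.tendsto_sum_div_zero hB).div
    (tendsto_partialNorm_div_partialNorm hc hc_div hx) hl'
  rw [zero_div] at hburn
  refine hburn.congr' ?_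
  filter_upwards [eventually_sum_predictableWeight_mul_pow_eq hc hx hl hm ξ one_ne_zero,
    (hx.abs.comp hm.tendsto_atTop).eventually_ne hl', hc_div.eventually_gt_atTop 0]
    with n hn hT hcn
  simp only [pow_one, Function.comp_apply] at hn hT
  rw [hn, div_mul_div_comm, mul_comm (partialNorm x n),
    mul_div_mul_left _ _ (mul_ne_zero hT hcn.ne'), ← sub_div, sub_sub_cancel, Pi.div_apply,
    div_div_div_cancel_right₀ hcn.ne']

end Path

end PartialNorm

section SelfNormalizedMartingale

variable {m0 : MeasurableSpace Ω} {μ : Measure Ω} {ℱ : Filtration ℕ m0} {c : ℕ → ℝ}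
  {x ξ : ℕ → Ω → ℝ} {C R : ℝ}

lemma stronglyMeasurable_predictableWeight (hx : StronglyAdapted ℱ x) (c : ℕ → ℝ) (m n k : ℕ) :
    StronglyMeasurable[ℱ k] (fun ω ↦ predictableWeight c (x · ω) m n k) := by
  unfold predictableWeight
  split_ifs with hkm
  · exact stronglyMeasurable_const
  have hxm : Measurable[ℱ k] (x m) := ((hx m).mono (ℱ.mono (not_lt.1 hkm))).measurable
  have hxk : Measurable[ℱ k] (x k) := (hx k).measurable
  exact Measurable.stronglyMeasurable (by fun_prop)

lemma isNegligibleMartingaleArray_predictableWeight_mul (hx : StronglyAdapted ℱ x)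
    (hξ : IsMartingaleDifference μ ℱ ξ) (hR : ∀ k ω, |ξ k ω| ≤ R) (hC : ∀ k, |c k| ≤ C)
    (hc_div : Tendsto (partialNorm c) atTop atTop) {m : ℕ → ℕ}
    (hm : IsBurnIn (partialNorm c) m) :
    IsNegligibleMartingaleArray μ ℱ
      (fun n k ω ↦ predictableWeight c (x · ω) (m n) n k * ξ k ω) m
      (fun n ↦ 2 * (C / partialNorm c n) * R) (4 * R ^ 2) where
  isMartingaleDifference n :=
    hξ.predictable_mul (stronglyMeasurable_predictableWeight hx c (m n) n)
      (C := fun k ↦ 2 * (|c k| / partialNorm c n))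
      fun k ω ↦ abs_predictableWeight_le c (x · ω) (m n) n k
  start_le := hm.le
  tendsto_start := hm.tendsto_atTop
  eq_zero n k hk := funext fun ω ↦ by
    rw [predictableWeight, if_pos hk, zero_mul, Pi.zero_apply]
  abs_entry_le n k ω := by
    have hw : |predictableWeight c (x · ω) (m n) n k| ≤ 2 * (C / partialNorm c n) :=
      (abs_predictableWeight_le c (x · ω) (m n) n k).trans <| mul_le_mul_of_nonneg_left
        (div_le_div_of_nonneg_right (hC k) (partialNorm_nonneg c n)) zero_le_two
    rw [abs_mul]
    exact mul_le_mul hw (hR k ω) (abs_nonneg _) ((abs_nonneg _).trans hw)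
  tendsto_bound := by
    simpa only [mul_zero, zero_mul] using
      ((hc_div.const_div_atTop C).const_mul 2).mul_const R
  sum_sq_le n ω := by
    calc ∑ k ∈ range n, (predictableWeight c (x · ω) (m n) n k * ξ k ω) ^ 2
        ≤ ∑ k ∈ range n, predictableWeight c (x · ω) (m n) n k ^ 2 * R ^ 2 := by
          refine sum_le_sum fun k _ ↦ ?_
          rw [mul_pow]
          exact mul_le_mul_of_nonneg_left (sq_le_sq' (abs_le.1 (hR k ω)).1 (abs_le.1 (hR k ω)).2)
            (sq_nonneg _)
      _ ≤ 4 * R ^ 2 := by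
          rw [← sum_mul]
          exact mul_le_mul_of_nonneg_right (sum_sq_predictableWeight_le c (x · ω) (m n) n)
            (sq_nonneg R)

theorem tendstoInDistribution_selfNormalized [IsFiniteMeasure μ] (hx : StronglyAdapted ℱ x)
    (hξ : IsMartingaleDifference μ ℱ ξ) (hR : ∀ k ω, |ξ k ω| ≤ R)
    (hc : ∀ k, c k ≠ 0) (hC : ∀ k, |c k| ≤ C) (hc_div : Tendsto (partialNorm c) atTop atTop)
    {Q : Measure Ω} [IsProbabilityMeasure Q] (hQ : Q ≪ μ) {v : ℝ≥0}
    (hxc : ∀ᵐ ω ∂Q, ∃ l ≠ 0, Tendsto (fun k ↦ x k ω / c k) atTop (𝓝 l))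
    (hξv : ∀ᵐ ω ∂Q, Tendsto (fun k ↦ ξ k ω ^ 2) atTop (𝓝 v)) :
    TendstoInDistribution
      (fun n ω ↦ (∑ k ∈ range n, x k ω * ξ k ω) / partialNorm (x · ω) n) atTop (id : ℝ → ℝ)
      (fun _ ↦ Q) (gaussianReal 0 v) := by
  obtain ⟨m, hm⟩ := exists_isBurnIn hc_div
  have hx_meas (k : ℕ) : Measurable (x k) := ((hx k).mono (ℱ.le k)).measurable
  have hnorm_meas (n : ℕ) : Measurable fun ω ↦ partialNorm (x · ω) n := by
    unfold partialNorm
    fun_prop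
  have harray := isNegligibleMartingaleArray_predictableWeight_mul hx hξ hR hC hc_div hm
  refine tendstoInDistribution_of_sub_mul_tendsto_zero
    (R := fun n ω ↦ |x (m n) ω / c (m n)| * partialNorm c n / partialNorm (x · ω) n)
    (harray.tendstoInDistribution_gaussianReal hQ ?_) (fun n ↦ ?_) (fun n ↦ ?_) ?_ ?_
  · filter_upwards [hxc, hξv] with ω ⟨l, hl, hxl⟩ hv
    exact tendsto_sum_sq_predictableWeight_mul hc hC hc_div hxl hl (hR · ω) hv hm
  · exact ((((hx_meas _).div_const _).abs.mul_const _).div (hnorm_meas n)).aemeasurable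
  · exact ((Finset.measurable_fun_sum _ fun k _ ↦ (hx_meas k).mul (hξ.measurable k)).div
      (hnorm_meas n)).aemeasurable
  · filter_upwards [hxc] with ω ⟨l, hl, hxl⟩
    exact tendsto_predictable_div_partialNorm (x := (x · ω)) hc hc_div hxl hl hm.tendsto_atTop
  · filter_upwards [hxc] with ω ⟨l, hl, hxl⟩
    exact tendsto_selfNormalized_sub_predictable hc hC hc_div hxl hl (hR · ω) hm

end SelfNormalizedMartingale

section ElephantRandomWalk

lemma sum_Icc_one_eq_sum_range (f : ℕ → ℝ) (n : ℕ) :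
    ∑ k ∈ Icc 1 n, f k = ∑ k ∈ range n, f (k + 1) := by
  rw [← Ico_add_one_right_eq_Icc, sum_Ico_eq_sum_range, Nat.add_sub_cancel]
  exact sum_congr rfl fun k _ ↦ by rw [add_comm]

/-- The filtration `k ↦ ℱ (k + 1)`. The hypotheses on the walk say nothing about time `0`, so its
first step is made known at time `0` of the shifted filtration. -/
def shiftedFiltration {m0 : MeasurableSpace Ω} (ℱ : Filtration ℕ m0) : Filtration ℕ m0 where
  seq k := ℱ (k + 1)
  mono' _ _ hij := ℱ.mono (Nat.succ_le_succ hij)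
  le' k := ℱ.le (k + 1)

/-- The mean of the first `k + 1` steps, which is the regressor of the estimator. -/
def erwMean (X : ℕ → Ω → ℝ) (k : ℕ) (ω : Ω) : ℝ := erwS X (k + 1) ω / (k + 1 : ℕ)

/-- The innovation `X (k + 2) - 𝔼[X (k + 2) | ℱ (k + 1)]` of a walk with memory parameter `p`. -/
def erwInnovation (X : ℕ → Ω → ℝ) (p : ℝ) (k : ℕ) (ω : Ω) : ℝ :=
  X (k + 2) ω - (2 * p - 1) * erwMean X k ω

/-- The order of magnitude of `erwMean X k` in the superdiffusive regime, with `a = 2 * p - 1`. -/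
def erwScale (a : ℝ) (k : ℕ) : ℝ := ((k + 1 : ℕ) : ℝ) ^ (a - 1)

lemma sqrt_erwV (X : ℕ → Ω → ℝ) (n : ℕ) (ω : Ω) :
    √(erwV X n ω) = 2 * partialNorm (erwMean X · ω) (n - 1) := by
  rw [erwV, sum_Icc_one_eq_sum_range, Real.sqrt_mul zero_le_four, partialNorm]
  congr 1
  rw [show (4 : ℝ) = 2 ^ 2 by norm_num, Real.sqrt_sq zero_le_two]

lemma sum_erwMean_mul_erwInnovation (X : ℕ → Ω → ℝ) (p : ℝ) (n : ℕ) (ω : Ω) :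
    ∑ k ∈ range n, erwMean X k ω * erwInnovation X p k ω
      = ∑ k ∈ range n, erwMean X k ω * (X (k + 2) ω + erwMean X k ω)
        - 2 * p * partialNorm (erwMean X · ω) n ^ 2 := by
  rw [sq_partialNorm, mul_sum, ← sum_sub_distrib]
  exact sum_congr rfl fun k _ ↦ by rw [erwInnovation]; ring

lemma sqrt_erwV_mul_erwPhat_sub (X : ℕ → Ω → ℝ) (p : ℝ) (n : ℕ) (ω : Ω) :
    √(erwV X n ω) * (erwPhat X n ω - p)
      = (∑ k ∈ range (n - 1), erwMean X k ω * erwInnovation X p k ω)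
        / partialNorm (erwMean X · ω) (n - 1) := by
  have hphat : erwPhat X n ω
      = (∑ k ∈ range (n - 1), erwMean X k ω * (X (k + 2) ω + erwMean X k ω))
        / (2 * partialNorm (erwMean X · ω) (n - 1) ^ 2) := by
    rw [erwPhat, sum_Icc_one_eq_sum_range, sum_Icc_one_eq_sum_range, sq_partialNorm]
    rfl
  rw [sqrt_erwV, hphat, sum_erwMean_mul_erwInnovation]
  rcases eq_or_ne (partialNorm (erwMean X · ω) (n - 1)) 0 with hzero | hne
  · simp only [hzero, mul_zero, zero_mul, div_zero]
  · field_simp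

lemma erwScale_ne_zero (a : ℝ) (k : ℕ) : erwScale a k ≠ 0 :=
  (Real.rpow_pos_of_pos (Nat.cast_pos.2 k.succ_pos) _).ne'

lemma abs_erwScale_le_one {a : ℝ} (ha : a ≤ 1) (k : ℕ) : |erwScale a k| ≤ 1 := by
  rw [erwScale, abs_of_nonneg (by positivity)]
  exact Real.rpow_le_one_of_one_le_of_nonpos (Nat.one_le_cast.2 k.succ_pos) (by linarith)

lemma tendsto_erwScale_zero {a : ℝ} (ha : a < 1) : Tendsto (erwScale a) atTop (𝓝 0) := by
  have hpow : Tendsto (fun n : ℕ ↦ (n : ℝ) ^ (a - 1)) atTop (𝓝 0) := by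
    simpa only [neg_sub, Function.comp_def] using
      (tendsto_rpow_neg_atTop (sub_pos.2 ha)).comp tendsto_natCast_atTop_atTop
  exact hpow.comp (tendsto_add_atTop_nat 1)

lemma tendsto_partialNorm_erwScale {a : ℝ} (ha : 1 / 2 ≤ a) :
    Tendsto (partialNorm (erwScale a)) atTop atTop := by
  refine Real.tendsto_sqrt_atTop.comp
    ((not_summable_iff_tendsto_nat_atTop_of_nonneg fun _ ↦ sq_nonneg _).1 fun hsum ↦ ?_)
  have hpow : Summable fun n : ℕ ↦ (n : ℝ) ^ (2 * (a - 1)) := by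
    refine (summable_nat_add_iff 1).1 (hsum.congr fun k ↦ ?_)
    rw [erwScale, ← Real.rpow_mul_natCast (Nat.cast_nonneg _), mul_comm 2, Nat.cast_two]
  linarith [Real.summable_nat_rpow.1 hpow]

lemma tendsto_erwMean_div_erwScale {X : ℕ → Ω → ℝ} {ω : Ω} {a l : ℝ}
    (hS : Tendsto (fun n ↦ erwS X n ω / (n : ℝ) ^ a) atTop (𝓝 l)) :
    Tendsto (fun k ↦ erwMean X k ω / erwScale a k) atTop (𝓝 l) := by
  refine (hS.comp (tendsto_add_atTop_nat 1)).congr fun k ↦ ?_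
  have hk : ((k + 1 : ℕ) : ℝ) ≠ 0 := Nat.cast_ne_zero.2 k.succ_ne_zero
  rw [Function.comp_apply, erwMean, erwScale, Real.rpow_sub_one hk, div_div, mul_div_cancel₀ _ hk]

lemma tendsto_erwMean_zero {X : ℕ → Ω → ℝ} {ω : Ω} {a l : ℝ} (ha : a < 1)
    (hS : Tendsto (fun n ↦ erwS X n ω / (n : ℝ) ^ a) atTop (𝓝 l)) :
    Tendsto (erwMean X · ω) atTop (𝓝 0) := by
  have hmul := (tendsto_erwMean_div_erwScale hS).mul (tendsto_erwScale_zero ha)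
  rw [mul_zero] at hmul
  exact hmul.congr fun k ↦ div_mul_cancel₀ _ (erwScale_ne_zero a k)

namespace IsERW

variable {m0 : MeasurableSpace Ω} {μ : Measure Ω} {ℱ : Filtration ℕ m0} {X : ℕ → Ω → ℝ} {p : ℝ}

lemma abs_step (h : IsERW μ ℱ X p) (k : ℕ) (ω : Ω) : |X (k + 1) ω| = 1 := by
  rcases h.2.2.1 (k + 1) k.succ_pos ω with hX | hX <;> simp only [hX, abs_neg, abs_one]

lemma sq_step (h : IsERW μ ℱ X p) (k : ℕ) (ω : Ω) : X (k + 1) ω ^ 2 = 1 := by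
  rw [← sq_abs, h.abs_step, one_pow]

lemma abs_erwMean_le_one (h : IsERW μ ℱ X p) (k : ℕ) (ω : Ω) : |erwMean X k ω| ≤ 1 := by
  rw [erwMean, abs_div, Nat.abs_cast, div_le_one₀ (Nat.cast_pos.2 k.succ_pos), erwS,
    sum_Icc_one_eq_sum_range]
  calc |∑ j ∈ range (k + 1), X (j + 1) ω| ≤ ∑ j ∈ range (k + 1), |X (j + 1) ω| :=
        abs_sum_le_sum_abs _ _
    _ = (k + 1 : ℕ) := by simp only [h.abs_step, sum_const, card_range, nsmul_eq_mul, mul_one]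

lemma abs_erwInnovation_le_two (h : IsERW μ ℱ X p) (k : ℕ) (ω : Ω) :
    |erwInnovation X p k ω| ≤ 2 := by
  have ha : |2 * p - 1| ≤ 1 := abs_le.2 ⟨by linarith [h.1], by linarith [h.2.1]⟩
  calc |erwInnovation X p k ω| ≤ |X (k + 2) ω| + |(2 * p - 1) * erwMean X k ω| := abs_sub _ _
    _ ≤ 1 + 1 := by
        rw [abs_mul]
        exact add_le_add (h.abs_step (k + 1) ω).le
          (mul_le_one₀ ha (abs_nonneg _) (h.abs_erwMean_le_one k ω))
    _ = 2 := one_add_one_eq_two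

lemma measurable_erwS (h : IsERW μ ℱ X p) (n : ℕ) : Measurable[ℱ n] (erwS X n) :=
  Finset.measurable_fun_sum _ fun k hk ↦
    (h.2.2.2.1 k (mem_Icc.1 hk).1).mono (ℱ.mono (mem_Icc.1 hk).2) le_rfl

lemma stronglyAdapted_erwMean (h : IsERW μ ℱ X p) :
    StronglyAdapted (shiftedFiltration ℱ) (erwMean X) := fun k ↦
  ((h.measurable_erwS (k + 1)).div_const _).stronglyMeasurable

lemma isMartingaleDifference_erwInnovation [IsFiniteMeasure μ] (h : IsERW μ ℱ X p) :
    IsMartingaleDifference μ (shiftedFiltration ℱ) (erwInnovation X p) := by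
  have hmean (k : ℕ) : StronglyMeasurable[ℱ (k + 1)] fun ω ↦ (2 * p - 1) * erwMean X k ω :=
    (h.stronglyAdapted_erwMean k).const_mul _
  have hstep (k : ℕ) : StronglyMeasurable[ℱ (k + 2)] (X (k + 2)) :=
    (h.2.2.2.1 (k + 2) (by lia)).stronglyMeasurable
  have hmean_int (k : ℕ) : Integrable (fun ω ↦ (2 * p - 1) * erwMean X k ω) μ :=
    .of_bound ((hmean k).mono (ℱ.le _)).aestronglyMeasurable |2 * p - 1| <| ae_of_all _ fun ω ↦ by
      rw [Real.norm_eq_abs, abs_mul]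
      exact mul_le_of_le_one_right (abs_nonneg _) (h.abs_erwMean_le_one k ω)
  have hstep_int (k : ℕ) : Integrable (X (k + 2)) μ :=
    .of_bound ((hstep k).mono (ℱ.le _)).aestronglyMeasurable 1 <| ae_of_all _ fun ω ↦
      (h.abs_step (k + 1) ω).le
  refine ⟨fun k ↦ (hstep k).sub ((hmean k).mono (ℱ.mono (k + 1).le_succ)),
    fun k ↦ (hstep_int k).sub (hmean_int k), fun k ↦ ?_⟩
  change μ[X (k + 2) - fun ω ↦ (2 * p - 1) * erwMean X k ω | ℱ (k + 1)] =ᵐ[μ] 0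
  filter_upwards [condExp_sub (hstep_int k) (hmean_int k) (ℱ (k + 1)),
    h.2.2.2.2 (k + 1) k.succ_pos] with ω hsub hdrift
  rw [hsub, Pi.sub_apply, hdrift,
    condExp_of_stronglyMeasurable (ℱ.le _) (hmean k) (hmean_int k)]
  exact sub_self _

lemma tendsto_sq_erwInnovation (h : IsERW μ ℱ X p) {ω : Ω}
    (hmean : Tendsto (erwMean X · ω) atTop (𝓝 0)) :
    Tendsto (fun k ↦ erwInnovation X p k ω ^ 2) atTop (𝓝 1) := by
  have hcross : Tendsto (fun k ↦ X (k + 2) ω * erwMean X k ω) atTop (𝓝 0) :=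
    bdd_le_mul_tendsto_zero' 1 (.of_forall fun k ↦ (h.abs_step (k + 1) ω).le) hmean
  have hlim := ((hcross.const_mul (2 * (2 * p - 1))).const_sub 1).add
    ((hmean.pow 2).const_mul ((2 * p - 1) ^ 2))
  simp only [mul_zero, sub_zero, ne_eq, OfNat.ofNat_ne_zero, not_false_eq_true, zero_pow,
    add_zero] at hlim
  refine hlim.congr fun k ↦ ?_
  rw [erwInnovation]
  linear_combination -(h.sq_step (k + 1) ω)

lemma tendstoInDistribution_sqrt_erwV_mul_erwPhat_sub [IsFiniteMeasure μ] (h : IsERW μ ℱ X p)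
    (hp : 3 / 4 ≤ p) (hp' : p < 1) {Q : Measure Ω} [IsProbabilityMeasure Q] (hQ : Q ≪ μ)
    (hS : ∀ᵐ ω ∂Q, ∃ l ≠ 0,
      Tendsto (fun n ↦ erwS X n ω / (n : ℝ) ^ (2 * p - 1)) atTop (𝓝 l)) :
    TendstoInDistribution (fun n ω ↦ √(erwV X n ω) * (erwPhat X n ω - p)) atTop (id : ℝ → ℝ)
      (fun _ ↦ Q) (gaussianReal 0 1) := by
  have hclt := tendstoInDistribution_selfNormalized h.stronglyAdapted_erwMean
    h.isMartingaleDifference_erwInnovation h.abs_erwInnovation_le_two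
    (erwScale_ne_zero (2 * p - 1)) (abs_erwScale_le_one (by linarith))
    (tendsto_partialNorm_erwScale (by linarith)) hQ (v := 1)
    (hS.mono fun _ ⟨l, hl, hSl⟩ ↦ ⟨l, hl, tendsto_erwMean_div_erwScale hSl⟩)
    (hS.mono fun _ ⟨_, _, hSl⟩ ↦
      h.tendsto_sq_erwInnovation (tendsto_erwMean_zero (by linarith) hSl))
  simp only [sqrt_erwV_mul_erwPhat_sub]
  exact ⟨fun n ↦ hclt.forall_aemeasurable (n - 1), hclt.aemeasurable_limit,
    hclt.tendsto.comp (tendsto_sub_atTop_nat 1)⟩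

end IsERW

end ElephantRandomWalk

/-- In the superdiffusive regime `3/4 < p < 1`, conditionally on `{L² > 0}`,
`√(V_n) (p̂_n - p)` converges in distribution to the standard Gaussian law. -/
theorem erw_clt_superdiffusive
    {m0 : MeasurableSpace Ω} (μ : Measure Ω) [IsProbabilityMeasure μ]
    (ℱ : Filtration ℕ m0) (X : ℕ → Ω → ℝ) (p : ℝ)
    (hERW : IsERW μ ℱ X p) (hp : 3 / 4 < p) (hp' : p < 1) (L : Ω → ℝ)
    (hL : ∀ᵐ ω ∂μ, Tendsto (fun n => erwS X n ω / (n : ℝ) ^ (2 * p - 1)) atTop (𝓝 (L ω)))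
    (hLpos : 0 < μ {ω | 0 < L ω ^ 2}) :
    ∀ f : ℝ →ᵇ ℝ,
      Tendsto (fun n => ∫ ω, f (Real.sqrt (erwV X n ω) * (erwPhat X n ω - p))
          ∂(μ[|{ω | 0 < L ω ^ 2}]))
        atTop (𝓝 (∫ x, f x ∂(gaussianReal 0 1))) := by
  have hL_meas : AEMeasurable L μ :=
    aemeasurable_of_tendsto_metrizable_ae atTop
      (fun n ↦ (((hERW.measurable_erwS n).mono (ℱ.le n) le_rfl).div_const _).aemeasurable) hL
  have hevent : NullMeasurableSet {ω | 0 < L ω ^ 2} μ :=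
    nullMeasurableSet_lt aemeasurable_const (hL_meas.pow_const 2)
  have : IsProbabilityMeasure (μ[|{ω | 0 < L ω ^ 2}]) := cond_isProbabilityMeasure hLpos.ne'
  have hS : ∀ᵐ ω ∂(μ[|{ω | 0 < L ω ^ 2}]), ∃ l ≠ 0,
      Tendsto (fun n ↦ erwS X n ω / (n : ℝ) ^ (2 * p - 1)) atTop (𝓝 l) := by
    filter_upwards [cond_absolutelyContinuous hL, ae_cond_mem₀ hevent] with ω hω hLω
    exact ⟨L ω, sq_pos_iff.1 hLω, hω⟩
  exact tendsto_integral_of_tendstoInDistribution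
    (hERW.tendstoInDistribution_sqrt_erwV_mul_erwPhat_sub hp.le hp' cond_absolutelyContinuous hS)
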